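/- Let m : ℕ → ℕ be a superadditive sequence (m_{i+j} ≥ m_i + m_j for all i, j ≥ 1) with m_0 = 0, set d_i := m_i/i for i ≥ 1, assume {d_i : i ≥ 1} is bounded above, and suppose there exists a real number b < 1 such that ⌈ j·d_i − b ⌉ ≤ j·d_j for all integers i ≥ j ≥ 1. Consider the ring ℂ[x, x^{−1}, t] (Laurent polynomials in x with coefficients polynomial in t) and let R be the ℂ-subalgebra consisting of all elements ∑_i f_i(x)·t^i such that for every i, the Laurent polynomial x^{m_i}·f_i(x) is a polynomial in x (i.e. f_i lies in the ℂ-span of the powers x^n with n ≥ −m_i). Then R is a finitely generated ℂ-algebra. -/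

import Mathlib

/-- A real number `d` such that every `j * d`, `j ≥ 1`, exceeds the natural number `m j` by at
most `b < 1` satisfies `m q = q * d` for some `q ≥ 1`; in particular `d` is rational. -/
theorem exists_pos_mul_eq_of_sub_le {m : ℕ → ℕ} {d b : ℝ} (hb : b < 1)
    (hle : ∀ j : ℕ, 1 ≤ j → (m j : ℝ) ≤ j * d)
    (hge : ∀ j : ℕ, 1 ≤ j → (j : ℝ) * d - b ≤ m j) :
    ∃ q : ℕ, 1 ≤ q ∧ (m q : ℝ) = q * d := by
  have hb0 : 0 ≤ b := by linarith [hle 1 le_rfl, hge 1 le_rfl]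
  obtain ⟨n, hn⟩ := exists_nat_one_div_lt (sub_pos.2 hb)
  obtain ⟨j, hj, -, hjd⟩ := Real.exists_nat_abs_mul_sub_round_le d n.succ_pos
  set k : ℤ := round ((j : ℝ) * d)
  have hsmall : |(j : ℝ) * d - k| < 1 - b := by
    refine hjd.trans_lt (lt_of_le_of_lt ?_ hn)
    push_cast
    exact one_div_le_one_div_of_le (by positivity) (by linarith)
  rw [abs_lt] at hsmall
  refine ⟨j, hj, ?_⟩
  have h₁ := hle j hj
  have h₂ := hge j hj
  rcases lt_trichotomy ((j : ℝ) * d) k with h | h | h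
  · have hlt : (m j : ℤ) < k := by exact_mod_cast h₁.trans_lt h
    have hle' : ((m j : ℤ) : ℝ) + 1 ≤ k := by exact_mod_cast hlt
    push_cast at hle'
    linarith
  · have hlt : k < (m j : ℤ) + 1 := by
      have : (k : ℝ) < (m j : ℝ) + 1 := by linarith
      exact_mod_cast this
    have hle' : (k : ℝ) ≤ ((m j : ℤ) : ℝ) := by exact_mod_cast Int.lt_add_one_iff.1 hlt
    push_cast at hle'
    linarith
  · exfalso
    set ε : ℝ := (j : ℝ) * d - k with hε
    have hε0 : 0 < ε := by linarith
    obtain ⟨N, hN⟩ : ∃ N : ℕ, ⌈1 / ε⌉₊ = N + 1 :=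
      Nat.exists_eq_succ_of_ne_zero (Nat.ceil_pos.2 (by positivity)).ne'
    have hNlt : (N : ℝ) * ε < 1 := by
      rw [← lt_div_iff₀ hε0]
      exact Nat.lt_ceil.1 (by omega)
    have hNge : 1 ≤ ((N : ℝ) + 1) * ε := by
      rw [← div_le_iff₀ hε0]
      exact_mod_cast hN ▸ Nat.le_ceil (1 / ε)
    have hNpos : 1 ≤ N := by
      by_contra! h0
      obtain rfl : N = 0 := by omega
      norm_num at hNge
      linarith
    have hNj : 1 ≤ N * j := Nat.mul_pos hNpos hj
    have h₃ := hle _ hNj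
    have h₄ := hge _ hNj
    have hexp : ((N * j : ℕ) : ℝ) * d = N * k + N * ε := by
      rw [hε]; push_cast; ring
    rw [hexp] at h₃ h₄
    have hlt : (m (N * j) : ℤ) < N * k + 1 := by
      have : (m (N * j) : ℝ) < N * k + 1 := by linarith
      exact_mod_cast this
    have hle' : ((m (N * j) : ℤ) : ℝ) ≤ N * k := by exact_mod_cast Int.lt_add_one_iff.1 hlt
    push_cast at hle'
    linarith

/-- A superadditive sequence satisfies `k * m i ≤ m (k * i)` for positive `k` and `i`. -/
theorem mul_le_apply_mul_of_superadditive {m : ℕ → ℕ}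
    (hsuper : ∀ i j : ℕ, 1 ≤ i → 1 ≤ j → m i + m j ≤ m (i + j)) {i k : ℕ}
    (hi : 1 ≤ i) (hk : 1 ≤ k) : k * m i ≤ m (k * i) := by
  induction k, hk using Nat.le_induction with
  | base => simp
  | succ k hk ih =>
    have := hsuper (k * i) i (Nat.mul_pos hk hi) hi
    rw [Nat.succ_mul, Nat.succ_mul]
    omega

/-- A bounded saturated superadditive sequence is additive with respect to some
positive period `q`. -/
theorem exists_add_period_of_saturated {m : ℕ → ℕ}
    (hsuper : ∀ i j : ℕ, 1 ≤ i → 1 ≤ j → m i + m j ≤ m (i + j))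
    (hbdd : BddAbove {x : ℝ | ∃ i : ℕ, 1 ≤ i ∧ x = (m i : ℝ) / (i : ℝ)})
    {b : ℝ} (hb : b < 1)
    (hsat : ∀ i j : ℕ, 1 ≤ j → j ≤ i →
      ((⌈(j : ℝ) * ((m i : ℝ) / (i : ℝ)) - b⌉ : ℤ) : ℝ) ≤ (j : ℝ) * ((m j : ℝ) / (j : ℝ))) :
    ∃ q : ℕ, 1 ≤ q ∧ ∀ i : ℕ, 1 ≤ i → m (i + q) = m i + m q := by
  set s : Set ℝ := {x : ℝ | ∃ i : ℕ, 1 ≤ i ∧ x = (m i : ℝ) / (i : ℝ)}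
  have hle : ∀ j : ℕ, 1 ≤ j → (m j : ℝ) ≤ j * sSup s := fun j hj => by
    have hj0 : (0 : ℝ) < j := by exact_mod_cast hj
    have := le_csSup hbdd ⟨j, hj, rfl⟩
    rwa [div_le_iff₀' hj0] at this
  have hge : ∀ j : ℕ, 1 ≤ j → (j : ℝ) * sSup s - b ≤ m j := fun j hj => by
    have hj0 : (0 : ℝ) < j := by exact_mod_cast hj
    have hsup : sSup s ≤ (m j + b) / j := by
      refine csSup_le ⟨_, 1, le_rfl, rfl⟩ ?_
      rintro _ ⟨i, hi, rfl⟩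
      have hi0 : (0 : ℝ) < i := by exact_mod_cast hi
      have hmono : (m i : ℝ) / i ≤ (m (j * i) : ℝ) / (j * i : ℕ) := by
        have : (j : ℝ) * m i ≤ m (j * i) := by
          exact_mod_cast mul_le_apply_mul_of_superadditive hsuper hi hj
        rw [div_le_div_iff₀ hi0 (by push_cast; positivity)]
        push_cast
        nlinarith
      have h := (Int.le_ceil _).trans (hsat (j * i) j hj (Nat.le_mul_of_pos_right j hi))
      rw [mul_div_cancel₀ _ hj0.ne'] at h
      rw [le_div_iff₀' hj0]
      linarith [mul_le_mul_of_nonneg_left hmono hj0.le]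
    rw [le_div_iff₀' hj0] at hsup
    linarith
  obtain ⟨q, hq, hqd⟩ := exists_pos_mul_eq_of_sub_le hb hle hge
  refine ⟨q, hq, fun i hi => le_antisymm ?_ (hsuper i q hi hq)⟩
  have h₁ := hle (i + q) (by omega)
  have h₂ := hge i hi
  have hlt : (m (i + q) : ℝ) < m i + m q + 1 := by
    push_cast at h₁
    linarith
  exact Nat.lt_succ_iff.1 (by exact_mod_cast hlt)

open LaurentPolynomial in
/-- If `m` is additive in the period `q`, the monomials `x` and `x ^ (-m i) * t ^ i`, `i ≤ q`,
generate every monomial `x ^ n * t ^ i` with `n ≥ -m i`. -/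
theorem monomial_T_mem_adjoin {K : Type*} [CommRing K] {m : ℕ → ℕ} {q : ℕ} (hq : 1 ≤ q)
    (hadd : ∀ i : ℕ, 1 ≤ i → m (i + q) = m i + m q) (i : ℕ) {n : ℤ} (hn : -(m i : ℤ) ≤ n) :
    Polynomial.monomial i (T n : LaurentPolynomial K) ∈
      Algebra.adjoin K (insert (Polynomial.monomial 0 (T 1))
        ((fun i => Polynomial.monomial i (T (-(m i : ℤ)))) '' Set.Iic q)) := by
  set A := Algebra.adjoin K (insert (Polynomial.monomial 0 (T 1 : LaurentPolynomial K))
    ((fun i => Polynomial.monomial i (T (-(m i : ℤ)))) '' Set.Iic q))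
  have hgen : ∀ i ≤ q, Polynomial.monomial i (T (-(m i : ℤ)) : LaurentPolynomial K) ∈ A :=
    fun i hi => Algebra.subset_adjoin (Set.mem_insert_of_mem _ ⟨i, hi, rfl⟩)
  have hleast : Polynomial.monomial i (T (-(m i : ℤ)) : LaurentPolynomial K) ∈ A := by
    clear hn
    induction i using Nat.strong_induction_on with
    | _ i ih =>
      rcases le_or_gt i q with h | h
      · exact hgen i h
      · obtain ⟨k, rfl⟩ : ∃ k, i = k + q := ⟨i - q, by omega⟩
        have hmul := A.mul_mem (ih k (by omega)) (hgen q le_rfl)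
        rw [Polynomial.monomial_mul_monomial, ← T_add] at hmul
        rw [hadd k (by omega)]
        convert hmul using 3
        push_cast
        ring
  obtain ⟨k, hk⟩ := Int.eq_ofNat_of_zero_le (a := n + m i) (by omega)
  have hx : Polynomial.monomial 0 (T 1 : LaurentPolynomial K) ∈ A :=
    Algebra.subset_adjoin (Set.mem_insert _ _)
  have hmul := A.mul_mem (A.pow_mem hx k) hleast
  rw [Polynomial.monomial_pow, Polynomial.monomial_mul_monomial, T_pow, ← T_add] at hmul
  convert hmul using 3
  · simp
  · omega

/-- Shokurov: an a-saturated adjoint algebra on an affine curve is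
finitely generated, made explicit on 𝔸¹.
Let `m : ℕ → ℕ` be superadditive with `m 0 = 0`, set `d_i := m_i / i` for `i ≥ 1`,
assume `{d_i : i ≥ 1}` is bounded above, and suppose there is a real number `b < 1`
with `⌈ j·d_i − b ⌉ ≤ j·d_j` for all `i ≥ j ≥ 1` (the saturation condition).
Consider the ring `ℂ[x, x⁻¹, t]`, formalized as polynomials in `t` with Laurent
polynomial coefficients, `Polynomial (LaurentPolynomial ℂ)`, and let `R` be the
ℂ-subalgebra consisting of all elements `∑ᵢ fᵢ(x)·tⁱ` such that for every `i` the
coefficient `fᵢ` lies in the ℂ-span of the powers `xⁿ = T n` with `n ≥ −mᵢ`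
(equivalently, `x^{mᵢ}·fᵢ(x)` is a polynomial in `x`).  Then `R` is a finitely
generated ℂ-algebra. -/
theorem adjoint_algebra_on_affine_line_fg
    (m : ℕ → ℕ) (hm0 : m 0 = 0)
    (hsuper : ∀ i j : ℕ, 1 ≤ i → 1 ≤ j → m i + m j ≤ m (i + j))
    (hbdd : BddAbove {x : ℝ | ∃ i : ℕ, 1 ≤ i ∧ x = (m i : ℝ) / (i : ℝ)})
    (b : ℝ) (hb : b < 1)
    (hsat : ∀ i j : ℕ, 1 ≤ j → j ≤ i →
      ((⌈(j : ℝ) * ((m i : ℝ) / (i : ℝ)) - b⌉ : ℤ) : ℝ) ≤ (j : ℝ) * ((m j : ℝ) / (j : ℝ)))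
    (R : Subalgebra ℂ (Polynomial (LaurentPolynomial ℂ)))
    (hR : (R : Set (Polynomial (LaurentPolynomial ℂ))) =
      {p | ∀ i : ℕ, p.coeff i ∈ Submodule.span ℂ
        {g : LaurentPolynomial ℂ | ∃ n : ℤ, -(m i : ℤ) ≤ n ∧ g = LaurentPolynomial.T n}}) :
    R.FG := by
  obtain ⟨q, hq, hadd⟩ := exists_add_period_of_saturated hsuper hbdd hb hsat
  have hmem : ∀ p, p ∈ R ↔ ∀ i : ℕ, p.coeff i ∈ Submodule.span ℂ
      {g : LaurentPolynomial ℂ | ∃ n : ℤ, -(m i : ℤ) ≤ n ∧ g = LaurentPolynomial.T n} :=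
    fun p => Set.ext_iff.1 hR p
  have hmono : ∀ (i : ℕ) (n : ℤ), -(m i : ℤ) ≤ n →
      Polynomial.monomial i (LaurentPolynomial.T n : LaurentPolynomial ℂ) ∈ R := by
    intro i n hn
    rw [hmem]
    intro k
    rw [Polynomial.coeff_monomial]
    split_ifs with h
    · exact Submodule.subset_span ⟨n, h ▸ hn, rfl⟩
    · exact Submodule.zero_mem _
  refine Subalgebra.fg_def.2 ⟨insert (Polynomial.monomial 0 (LaurentPolynomial.T 1))
      ((fun i => Polynomial.monomial i (LaurentPolynomial.T (-(m i : ℤ)))) '' Set.Iic q),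
    ((Set.finite_Iic q).image _).insert _,
    le_antisymm (Algebra.adjoin_le ?_) fun p hp => ?_⟩
  · rintro _ (rfl | ⟨i, -, rfl⟩)
    · exact hmono 0 1 (by omega)
    · exact hmono i _ le_rfl
  · rw [p.as_sum_support]
    refine Subalgebra.sum_mem _ fun i _ => ?_
    have hcoeff := (hmem p).1 hp i
    generalize p.coeff i = f at hcoeff ⊢
    induction hcoeff using Submodule.span_induction with
    | mem g hg =>
      obtain ⟨n, hn, rfl⟩ := hg
      exact monomial_T_mem_adjoin hq hadd i hn
    | zero => simp
    | add g h _ _ hg hh =>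
      rw [map_add]
      exact Subalgebra.add_mem _ hg hh
    | smul c g _ hg =>
      rw [← Polynomial.smul_monomial]
      exact Subalgebra.smul_mem _ hg c
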